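/- If 𝔉 is a flip-flop family with respect to a continuous map f : X → X and a continuous function φ : K → ℝ (K compact), then there exists a nonempty compact forward-invariant set Ω ⊆ K such that the Birkhoff averages (1/n)∑_{j<n} φ(f^j(x)) converge to 0 uniformly on Ω. In particular there exists an f-invariant Borel probability measure μ supported in K with ∫ φ dμ = 0. -/

import Mathlib

open Filter Topology Set

variable {X : Type*} [MetricSpace X]

/-- Birkhoff sum of `φ` of length `n` along the orbit of `f`. -/
noncomputable def birkhoff (f : X → X) (φ : X → ℝ) (n : ℕ) (x : X) : ℝ :=
  ∑ i ∈ Finset.range n, φ (f^[i] x)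

/-- A flip-flop family for `f : X → X` and `φ : K → ℝ`: two disjoint families of compact
subsets of `K` with diameters bounded by `d₀`, separated in sign by `α` (FF1), with the
covering property (FF2) and uniform expansion `lam > 1` along segments (FF3). -/
structure FlipFlopFamily (f : X → X) (K : Set X) (φ : X → ℝ) where
  pos : Set (Set X)
  neg : Set (Set X)
  disj : Disjoint pos neg
  mem_compact : ∀ D ∈ pos ∪ neg, IsCompact D
  mem_subset : ∀ D ∈ pos ∪ neg, D ⊆ K
  mem_nonempty : ∀ D ∈ pos ∪ neg, D.Nonempty
  d₀ : ℝ
  diam_le : ∀ D ∈ pos ∪ neg, Metric.diam D ≤ d₀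
  α : ℝ
  α_pos : 0 < α
  ff1_pos : ∀ D ∈ pos, ∀ x ∈ D, α < φ x
  ff1_neg : ∀ D ∈ neg, ∀ x ∈ D, φ x < -α
  ff2_pos : ∀ D ∈ pos ∪ neg, ∃ Dp, IsCompact Dp ∧ Dp ⊆ D ∧ f '' Dp ∈ pos
  ff2_neg : ∀ D ∈ pos ∪ neg, ∃ Dm, IsCompact Dm ∧ Dm ⊆ D ∧ f '' Dm ∈ neg
  lam : ℝ
  lam_gt_one : 1 < lam
  ff3 : ∀ E : Set X, (∃ D ∈ pos ∪ neg, E ⊆ D) → f '' E ∈ pos ∪ neg →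
    ∀ x ∈ E, ∀ y ∈ E, lam * dist x y ≤ dist (f x) (f y)

/-- An `𝔉`-segment of length `T`: a sequence `D 0, …, D T` with `f '' (D i) = D (i+1)`,
each `D i` contained in a member of `𝔉`, and `D T` a member of `𝔉`. `D 0` is its entrance. -/
def IsSegment {f : X → X} {K : Set X} {φ : X → ℝ} (𝔉 : FlipFlopFamily f K φ)
    (D : ℕ → Set X) (T : ℕ) : Prop :=
  (∀ i < T, f '' D i = D (i + 1)) ∧ (∀ i ≤ T, ∃ D' ∈ 𝔉.pos ∪ 𝔉.neg, D i ⊆ D') ∧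
    D T ∈ 𝔉.pos ∪ 𝔉.neg

open MeasureTheory

def ffTrunc (σ : ℕ → Bool) (t : ℕ) : ℕ → Bool := fun j => if j < t then σ j else false

lemma ffTrunc_ffTrunc (σ : ℕ → Bool) {r t : ℕ} (h : r ≤ t) :
    ffTrunc (ffTrunc σ t) r = ffTrunc σ r := by
  funext j
  unfold ffTrunc
  by_cases hj : j < r
  · simp [hj, lt_of_lt_of_le hj h]
  · simp [hj]

lemma ff_exists_strategy (F : ℕ → (ℕ → Bool) → Bool) :
    ∃ σ : ℕ → Bool, ∀ t, σ t = F t (ffTrunc σ t) := by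
  let s : ℕ → (ℕ → Bool) := fun n =>
    Nat.rec (fun _ => false) (fun t s => Function.update s t (F t s)) n
  have hs : ∀ t, s (t + 1) = Function.update (s t) t (F t (s t)) := fun t => rfl
  let σ : ℕ → Bool := fun t => F t (s t)
  have key : ∀ t, s t = ffTrunc σ t := by
    intro t
    induction t with
    | zero => funext j; simp [ffTrunc, s]
    | succ t ih =>
      funext j
      rw [hs]
      by_cases hj : j = t
      · subst hj
        simp [ffTrunc, σ]
      · rw [Function.update_of_ne hj, ih]
        have : j < t ↔ j < t + 1 := by omega
        simp [ffTrunc, this]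
  exact ⟨σ, fun t => by rw [← key t]⟩

lemma ff_feedback (u : ℕ → ℝ) (p : ℕ) (B : ℝ) (hB : ∀ t, |u t| ≤ B)
    (h1 : ∀ s, 0 < ∑ t ∈ Finset.range s, u t → u (s + p) ≤ 0)
    (h2 : ∀ s, ∑ t ∈ Finset.range s, u t ≤ 0 → 0 ≤ u (s + p)) (n : ℕ) :
    |∑ t ∈ Finset.range n, u t| ≤ (p + 1) * B := by
  have hB0 : 0 ≤ B := (abs_nonneg _).trans (hB 0)
  have hwin : ∀ m k : ℕ, |∑ t ∈ Finset.range k, u (m + t)| ≤ k * B := by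
    intro m k
    refine (Finset.abs_sum_le_sum_abs _ _).trans ?_
    refine (Finset.sum_le_sum fun i _ => hB (m + i)).trans ?_
    simp
  induction n with
  | zero => simp; positivity
  | succ n ih =>
    by_cases hn : n < p
    · have := hwin 0 (n + 1)
      simp only [zero_add] at this
      refine this.trans ?_
      have : ((n + 1 : ℕ) : ℝ) ≤ p + 1 := by exact_mod_cast (by omega)
      gcongr
    · obtain ⟨s, rfl⟩ : ∃ s, n = s + p := ⟨n - p, by omega⟩
      have e1 : ∑ t ∈ Finset.range (s + p + 1), u t
          = ∑ t ∈ Finset.range s, u t + ∑ t ∈ Finset.range (p + 1), u (s + t) := by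
        rw [add_assoc, Finset.sum_range_add]
      have e2 : ∑ t ∈ Finset.range (s + p + 1), u t
          = ∑ t ∈ Finset.range (s + p), u t + u (s + p) := Finset.sum_range_succ _ _
      have h3 := abs_le.1 (hwin s (p + 1))
      have h4 := abs_le.1 ih
      push_cast at h3
      rw [abs_le]
      rcases lt_or_ge 0 (∑ t ∈ Finset.range s, u t) with h | h
      · have := h1 s h
        constructor <;> linarith [h3.1, h3.2, h4.1, h4.2]
      · have := h2 s h
        constructor <;> linarith [h3.1, h3.2, h4.1, h4.2]

lemma ff_shift (c : ℕ → ℝ) (l : ℕ) (B : ℝ) (hB : ∀ j, |c j| ≤ B) (n : ℕ) :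
    |∑ t ∈ Finset.range n, c t - ∑ t ∈ Finset.range n, (if l ≤ t then c (t - l) else 0)|
      ≤ l * B := by
  have hB0 : 0 ≤ B := (abs_nonneg _).trans (hB 0)
  have hwin : ∀ m k : ℕ, |∑ t ∈ Finset.range k, c (m + t)| ≤ k * B := by
    intro m k
    refine (Finset.abs_sum_le_sum_abs _ _).trans ?_
    refine (Finset.sum_le_sum fun i _ => hB (m + i)).trans ?_
    simp
  have hz : ∀ k ≤ l, ∑ t ∈ Finset.range k, (if l ≤ t then c (t - l) else 0) = 0 := by
    intro k hk
    apply Finset.sum_eq_zero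
    intro t ht
    rw [if_neg]
    have := Finset.mem_range.1 ht
    omega
  rcases le_total n l with h | h
  · rw [hz n h, sub_zero]
    have := hwin 0 n
    simp only [zero_add] at this
    refine this.trans ?_
    gcongr
  · obtain ⟨k, rfl⟩ := Nat.exists_eq_add_of_le h
    have e1 : ∑ t ∈ Finset.range (l + k), (if l ≤ t then c (t - l) else 0)
        = ∑ t ∈ Finset.range k, c t := by
      rw [Finset.sum_range_add, hz l le_rfl, zero_add]
      apply Finset.sum_congr rfl
      intro t _
      simp
    rw [e1, add_comm l k, Finset.sum_range_add, add_sub_cancel_left]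
    exact hwin k l

lemma ff_window (A : ℕ → ℕ → ℝ) (w u : ℕ → ℝ) (l : ℕ → ℕ) (M e C : ℝ)
    (hA0 : ∀ j, A 0 j = 0) (hA1 : ∀ j, |A 1 j| ≤ M)
    (hA : ∀ i j, |A (i + 2) j - A (i + 1) j| ≤ e * (1 / 2) ^ i)
    (hw : ∀ i j, |w j - A (i + 1) j| ≤ e * (1 / 2) ^ i)
    (hu : ∀ t, u t = ∑' i, if l i ≤ t then A (i + 1) (t - l i) - A i (t - l i) else 0)
    (hU : ∀ n, |∑ t ∈ Finset.range n, u t| ≤ C) (ε : ℝ) (hε : 0 < ε) :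
    ∃ N : ℕ, ∀ n ≥ N, ∀ m, |∑ j ∈ Finset.range n, w (m + j)| ≤ ε * n := by
  have he : 0 ≤ e := by
    have := (abs_nonneg _).trans (hA 0 0)
    simpa using this
  have hM : 0 ≤ M := (abs_nonneg _).trans (hA1 0)
  obtain ⟨I, hI⟩ : ∃ I : ℕ, 3 * e * (1 / 2) ^ I ≤ ε / 2 := by
    have h1 : Tendsto (fun I : ℕ => 3 * e * (1 / 2 : ℝ) ^ I) atTop (𝓝 (3 * e * 0)) :=
      (tendsto_pow_atTop_nhds_zero_of_lt_one (by norm_num) (by norm_num)).const_mul _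
    rw [mul_zero] at h1
    exact ((h1.eventually_lt_const (half_pos hε)).exists).imp fun _ h => h.le
  set d : ℕ → ℕ → ℝ := fun i t =>
    if l i ≤ t then A (i + 1) (t - l i) - A i (t - l i) else 0 with hd
  have hdb : ∀ i t, |d (i + 1) t| ≤ e * (1 / 2) ^ i := by
    intro i t
    simp only [hd]
    split_ifs
    · exact hA i _
    · simp; positivity
  have hcb : ∀ i j, |A (i + 1) j - A i j| ≤ M + e := by
    intro i j
    rcases i with _ | i
    · rw [hA0, sub_zero]; linarith [hA1 j]
    · refine (hA i j).trans ?_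
      have : (1 / 2 : ℝ) ^ i ≤ 1 := pow_le_one₀ (by norm_num) (by norm_num)
      nlinarith
  have hgeo : HasSum (fun i : ℕ => (e * (1 / 2) ^ I) * (1 / 2 : ℝ) ^ i) ((e * (1 / 2) ^ I) * 2) :=
    hasSum_geometric_two.mul_left _
  have hsum : ∀ t, Summable fun i => d i t := by
    intro t
    rw [← summable_nat_add_iff 1]
    refine Summable.of_norm_bounded (summable_geometric_two.mul_left e) fun i => ?_
    exact hdb i t
  have htail : ∀ t, |u t - ∑ i ∈ Finset.range (I + 1), d i t| ≤ 2 * (e * (1 / 2) ^ I) := by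
    intro t
    have h1 := (hsum t).sum_add_tsum_nat_add (I + 1)
    have h2 : u t - ∑ i ∈ Finset.range (I + 1), d i t = ∑' i, d (i + (I + 1)) t := by
      rw [hu t]; linarith
    rw [h2, mul_comm 2, ← Real.norm_eq_abs]
    refine tsum_of_norm_bounded hgeo fun i => ?_
    refine (hdb (i + I) t).trans (le_of_eq ?_)
    rw [pow_add]; ring
  set Q : ℕ → ℝ := fun t => A (I + 1) t - ∑ i ∈ Finset.range (I + 1), d i t with hQ
  have hQb : ∀ n, |∑ t ∈ Finset.range n, Q t| ≤ ∑ i ∈ Finset.range (I + 1), l i * (M + e) := by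
    intro n
    have h1 : ∀ t, Q t = ∑ i ∈ Finset.range (I + 1), ((A (i + 1) t - A i t) - d i t) := by
      intro t
      rw [Finset.sum_sub_distrib, Finset.sum_range_sub (fun i => A i t), hA0, sub_zero]
    simp_rw [h1]
    rw [Finset.sum_comm]
    refine (Finset.abs_sum_le_sum_abs _ _).trans (Finset.sum_le_sum fun i _ => ?_)
    rw [Finset.sum_sub_distrib]
    exact ff_shift (fun j => A (i + 1) j - A i j) (l i) (M + e) (hcb i) n
  set CI := ∑ i ∈ Finset.range (I + 1), l i * (M + e) with hCI
  obtain ⟨N, hN⟩ := exists_nat_ge ((2 * C + 2 * CI) / (ε / 2))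
  refine ⟨N, fun n hn m => ?_⟩
  have hdec : ∀ t, |w t - (u t + Q t)| ≤ 3 * e * (1 / 2) ^ I := by
    intro t
    have a1 := abs_le.1 (hw I t)
    have a2 := abs_le.1 (htail t)
    rw [abs_le]
    simp only [hQ]
    constructor <;> linarith [a1.1, a1.2, a2.1, a2.2]
  have h1 : |∑ j ∈ Finset.range n, (w (m + j) - (u (m + j) + Q (m + j)))| ≤ n * (ε / 2) := by
    refine (Finset.abs_sum_le_sum_abs _ _).trans ?_
    refine (Finset.sum_le_sum fun i _ => (hdec (m + i)).trans hI).trans ?_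
    simp
  rw [Finset.sum_sub_distrib, Finset.sum_add_distrib] at h1
  have u1 := Finset.sum_range_add u m n
  have q1 := Finset.sum_range_add Q m n
  have b1 := abs_le.1 (hU (m + n))
  have b2 := abs_le.1 (hU m)
  have b3 := abs_le.1 (hQb (m + n))
  have b4 := abs_le.1 (hQb m)
  have b5 := abs_le.1 h1
  have b6 : 2 * C + 2 * CI ≤ n * (ε / 2) := by
    rw [div_le_iff₀ (half_pos hε)] at hN
    refine hN.trans ?_
    have : (N : ℝ) ≤ n := by exact_mod_cast hn
    gcongr
  rw [abs_le]
  constructor <;> linarith [b1.1, b1.2, b2.1, b2.2, b3.1, b3.2, b4.1, b4.2, b5.1, b5.2]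

lemma ff_comb (v : ℕ → (ℕ → Bool) → ℝ) (α M : ℝ) (hα : 0 < α)
    (hpos : ∀ j σ, σ j = true → α < v j σ) (hneg : ∀ j σ, σ j = false → v j σ < -α)
    (hM : ∀ j σ, |v j σ| ≤ M)
    (hv : ∀ e : ℝ, 0 < e → ∃ k : ℕ, ∀ j σ τ, (∀ i < j + 1 + k, σ i = τ i) →
      |v j σ - v j τ| ≤ e) :
    ∃ σ : ℕ → Bool, ∀ ε : ℝ, 0 < ε → ∃ N : ℕ, ∀ n ≥ N, ∀ m,
      |∑ j ∈ Finset.range n, v (m + j) σ| ≤ ε * n := by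
  set e : ℝ := α / 4 with he
  have he0 : 0 < e := by positivity
  have hM0 : 0 ≤ M := (abs_nonneg _).trans (hM 0 fun _ => false)
  choose k hk using fun i : ℕ => hv (e * (1 / 2) ^ i) (by positivity)
  let l : ℕ → ℕ := fun i => ∑ s ∈ Finset.range (i + 1), k s
  have hlk : ∀ i, k i ≤ l i := fun i =>
    Finset.single_le_sum (f := k) (fun _ _ => Nat.zero_le _) (Finset.self_mem_range_succ i)
  have hlm : ∀ i, l i ≤ l (i + 1) := by
    intro i
    change _ ≤ ∑ s ∈ Finset.range (i + 1 + 1), k s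
    rw [Finset.sum_range_succ]
    exact Nat.le_add_right _ _
  let A : (ℕ → Bool) → ℕ → ℕ → ℝ := fun σ i j =>
    match i with
    | 0 => 0
    | i + 1 => v j (ffTrunc σ (j + 1 + l i))
  let u : (ℕ → Bool) → ℕ → ℝ := fun σ t =>
    ∑' i, if l i ≤ t then A σ (i + 1) (t - l i) - A σ i (t - l i) else 0
  have hloc : ∀ σ t s, t < s → u (ffTrunc σ s) t = u σ t := by
    intro σ t s hts
    apply tsum_congr
    intro i
    split_ifs with h
    · rcases i with _ | i
      · simp only [A]
        rw [ffTrunc_ffTrunc _ (by omega)]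
      · simp only [A]
        have := hlm i
        rw [ffTrunc_ffTrunc _ (by omega), ffTrunc_ffTrunc _ (by omega)]
    · rfl
  obtain ⟨σ, hσ⟩ := ff_exists_strategy
    (fun t τ => decide (∑ s ∈ Finset.range t, u τ s ≤ 0))
  have hσ' : ∀ t, σ t = decide (∑ s ∈ Finset.range t, u σ s ≤ 0) := by
    intro t
    rw [hσ t]
    have : ∑ s ∈ Finset.range t, u (ffTrunc σ t) s = ∑ s ∈ Finset.range t, u σ s :=
      Finset.sum_congr rfl fun s hs => hloc σ s t (Finset.mem_range.1 hs)
    rw [this]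
  refine ⟨σ, ?_⟩
  have hA0 : ∀ j, A σ 0 j = 0 := fun j => rfl
  have hA1 : ∀ j, |A σ 1 j| ≤ M := fun j => hM _ _
  have hagree : ∀ j r i, i < j + 1 + r → ffTrunc σ (j + 1 + r) i = σ i := by
    intro j r i hi
    simp [ffTrunc, hi]
  have hA2 : ∀ i j, |A σ (i + 2) j - A σ (i + 1) j| ≤ e * (1 / 2) ^ i := by
    intro i j
    apply hk
    intro s hs
    have h1 := hlk i
    have h2 := hlm i
    rw [hagree _ _ _ (by omega), hagree _ _ _ (by omega)]
  have hw : ∀ i j, |v j σ - A σ (i + 1) j| ≤ e * (1 / 2) ^ i := by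
    intro i j
    apply hk
    intro s hs
    have h1 := hlk i
    rw [hagree _ _ _ (by omega)]
  have hdb : ∀ i t, |if l (i + 1) ≤ t then A σ (i + 1 + 1) (t - l (i + 1)) -
      A σ (i + 1) (t - l (i + 1)) else 0| ≤ e * (1 / 2) ^ i := by
    intro i t
    split_ifs
    · exact hA2 i _
    · simp; positivity
  have hrest : ∀ t, |u σ t - (if l 0 ≤ t then A σ 1 (t - l 0) else 0)| ≤ α / 2 := by
    intro t
    have hs : Summable fun i => if l i ≤ t then A σ (i + 1) (t - l i) - A σ i (t - l i) else 0 := by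
      rw [← summable_nat_add_iff 1]
      refine Summable.of_norm_bounded (summable_geometric_two.mul_left e) fun i => ?_
      exact hdb i t
    have h1 := hs.sum_add_tsum_nat_add 1
    simp only [Finset.sum_range_one, zero_add, hA0, sub_zero] at h1
    have h2 : u σ t - (if l 0 ≤ t then A σ 1 (t - l 0) else 0) = ∑' i, (if l (i + 1) ≤ t then
        A σ (i + 1 + 1) (t - l (i + 1)) - A σ (i + 1) (t - l (i + 1)) else 0) := by
      rw [sub_eq_iff_eq_add']; exact h1.symm
    rw [h2, ← Real.norm_eq_abs]
    have h3 : α / 2 = e * 2 := by rw [he]; ring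
    rw [h3]
    exact tsum_of_norm_bounded (hasSum_geometric_two.mul_left e) fun i => hdb i t
  have hub : ∀ t, |u σ t| ≤ M + α := by
    intro t
    have h1 := abs_le.1 (hrest t)
    have h2 : |if l 0 ≤ t then A σ 1 (t - l 0) else 0| ≤ M := by
      split_ifs
      · exact hA1 _
      · simpa using hM0
    have h2 := abs_le.1 h2
    rw [abs_le]
    constructor <;> linarith [h1.1, h1.2, h2.1, h2.2]
  have hdel : ∀ s, |u σ (s + l 0) - A σ 1 s| ≤ α / 2 := by
    intro s
    have := hrest (s + l 0)
    simpa using this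
  have hU := ff_feedback (u σ) (l 0) (M + α) hub (by
      intro s hs
      have h1 : σ s = false := by rw [hσ' s]; simpa using hs
      have h2 : A σ 1 s < -α := hneg _ _ (by rw [hagree _ _ _ (by omega), h1])
      have h3 := abs_le.1 (hdel s)
      linarith [h3.2]) (by
      intro s hs
      have h1 : σ s = true := by rw [hσ' s]; simpa using hs
      have h2 : α < A σ 1 s := hpos _ _ (by rw [hagree _ _ _ (by omega), h1])
      have h3 := abs_le.1 (hdel s)
      linarith [h3.1])
  intro ε hε
  exact ff_window (A σ) (fun j => v j σ) (u σ) l M e _ hA0 hA1 hA2 hw (fun t => rfl) hU ε hε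

lemma ff_coding {X : Type*} [MetricSpace X] {f : X → X} {K : Set X} {φ : X → ℝ}
    (hf : Continuous f) (hK : IsCompact K) (hφ : ContinuousOn φ K)
    (𝔉 : FlipFlopFamily f K φ) (hne : (𝔉.pos ∪ 𝔉.neg).Nonempty) :
    ∃ x : X, (∀ n, f^[n] x ∈ K) ∧ ∀ ε : ℝ, 0 < ε → ∃ N : ℕ, ∀ n ≥ N, ∀ m,
      |∑ j ∈ Finset.range n, φ (f^[m + j] x)| ≤ ε * n := by
  obtain ⟨D0, hD0⟩ := hne
  have hsub : ∀ (b : Bool) (D : Set X), ∃ E, D ∈ 𝔉.pos ∪ 𝔉.neg →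
      IsCompact E ∧ E ⊆ D ∧ f '' E ∈ (cond b 𝔉.pos 𝔉.neg) := by
    intro b D
    by_cases hD : D ∈ 𝔉.pos ∪ 𝔉.neg
    · cases b
      · obtain ⟨E, hE⟩ := 𝔉.ff2_neg D hD
        exact ⟨E, fun _ => hE⟩
      · obtain ⟨E, hE⟩ := 𝔉.ff2_pos D hD
        exact ⟨E, fun _ => hE⟩
    · exact ⟨∅, fun h => absurd h hD⟩
  choose sub hsub using hsub
  let DD : (ℕ → Bool) → ℕ → Set X := fun σ n =>
    Nat.rec D0 (fun n D => f '' sub (σ n) D) n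
  have hDDs : ∀ σ n, DD σ (n + 1) = f '' sub (σ n) (DD σ n) := fun σ n => rfl
  have hmem : ∀ σ n, DD σ n ∈ 𝔉.pos ∪ 𝔉.neg := by
    intro σ n
    induction n with
    | zero => exact hD0
    | succ n ih =>
      rw [hDDs]
      have := (hsub (σ n) _ ih).2.2
      cases h : σ n
      · rw [h] at this; exact Or.inr this
      · rw [h] at this; exact Or.inl this
  have hagree : ∀ (σ τ : ℕ → Bool) n, (∀ i < n, σ i = τ i) → DD σ n = DD τ n := by
    intro σ τ n
    induction n with
    | zero => intro _; rfl
    | succ n ih =>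
      intro h
      rw [hDDs, hDDs, ih (fun i hi => h i (by omega)), h n (by omega)]
  have hfin : ∀ σ n, ∀ y ∈ DD σ n, ∃ x, f^[n] x = y ∧
      ∀ i < n, f^[i] x ∈ sub (σ i) (DD σ i) := by
    intro σ n
    induction n with
    | zero => intro y hy; exact ⟨y, rfl, fun i hi => by omega⟩
    | succ n ih =>
      intro y hy
      rw [hDDs] at hy
      obtain ⟨z, hz, rfl⟩ := hy
      obtain ⟨x, hx, hxi⟩ := ih z ((hsub _ _ (hmem σ n)).2.1 hz)
      refine ⟨x, by rw [Function.iterate_succ_apply', hx], fun i hi => ?_⟩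
      rcases Nat.lt_succ_iff_lt_or_eq.1 hi with h | h
      · exact hxi i h
      · subst h; rw [hx]; exact hz
  have hpt : ∀ σ, ∃ x, ∀ i, f^[i] x ∈ sub (σ i) (DD σ i) := by
    intro σ
    have hcl : ∀ i, IsClosed {x | f^[i] x ∈ sub (σ i) (DD σ i)} := fun i =>
      (hsub _ _ (hmem σ i)).1.isClosed.preimage (hf.iterate i)
    have := IsCompact.nonempty_iInter_of_sequence_nonempty_isCompact_isClosed
      (fun n => {x | ∀ i ≤ n, f^[i] x ∈ sub (σ i) (DD σ i)})
      (fun n x hx i hi => hx i (by omega))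
      (fun n => by
        obtain ⟨y, hy⟩ := 𝔉.mem_nonempty _ (hmem σ (n + 1))
        obtain ⟨x, _, hx⟩ := hfin σ (n + 1) y hy
        exact ⟨x, fun i hi => hx i (by omega)⟩)
      (by
        have h0 := (hsub (σ 0) _ (hmem σ 0)).1
        convert h0 using 1
        ext x
        simp)
      (fun n => by
        have : {x | ∀ i ≤ n, f^[i] x ∈ sub (σ i) (DD σ i)}
            = ⋂ i, ⋂ (_ : i ≤ n), {x | f^[i] x ∈ sub (σ i) (DD σ i)} := by
          ext x; simp
        rw [this]
        exact isClosed_iInter fun i => isClosed_iInter fun _ => hcl i)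
    obtain ⟨x, hx⟩ := this
    rw [mem_iInter] at hx
    exact ⟨x, fun i => hx i i le_rfl⟩
  choose pt hpt using hpt
  have hptD : ∀ σ i, f^[i] (pt σ) ∈ DD σ i := fun σ i => (hsub _ _ (hmem σ i)).2.1 (hpt σ i)
  have hptK : ∀ σ i, f^[i] (pt σ) ∈ K := fun σ i => 𝔉.mem_subset _ (hmem σ i) (hptD σ i)
  have hlam : 0 < 𝔉.lam := by linarith [𝔉.lam_gt_one]
  have hdist : ∀ (σ τ : ℕ → Bool) (k j : ℕ), (∀ i < j + k, σ i = τ i) →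
      𝔉.lam ^ k * dist (f^[j] (pt σ)) (f^[j] (pt τ)) ≤ 𝔉.d₀ := by
    intro σ τ k
    induction k with
    | zero =>
      intro j h
      rw [pow_zero, one_mul]
      have h2 := hptD τ j
      rw [← hagree σ τ j (fun i hi => h i (by omega))] at h2
      exact (Metric.dist_le_diam_of_mem (𝔉.mem_compact _ (hmem σ j)).isBounded
        (hptD σ j) h2).trans (𝔉.diam_le _ (hmem σ j))
    | succ k ih =>
      intro j h
      have h1 := ih (j + 1) (fun i hi => h i (by omega))
      have h2 := hpt τ j
      rw [← hagree σ τ j (fun i hi => h i (by omega)), ← h j (by omega)] at h2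
      have h3 := 𝔉.ff3 (sub (σ j) (DD σ j)) ⟨_, hmem σ j, (hsub _ _ (hmem σ j)).2.1⟩
        (hmem σ (j + 1)) _ (hpt σ j) _ h2
      rw [← Function.iterate_succ_apply' f, ← Function.iterate_succ_apply' f] at h3
      calc 𝔉.lam ^ (k + 1) * dist (f^[j] (pt σ)) (f^[j] (pt τ))
          = 𝔉.lam ^ k * (𝔉.lam * dist (f^[j] (pt σ)) (f^[j] (pt τ))) := by ring
        _ ≤ _ := (mul_le_mul_of_nonneg_left h3 (by positivity)).trans h1
  obtain ⟨M, hM⟩ := hK.exists_bound_of_continuousOn hφ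
  have huc := Metric.uniformContinuousOn_iff.1 (hK.uniformContinuousOn_of_continuous hφ)
  obtain ⟨σ, hσ⟩ := ff_comb (fun j σ => φ (f^[j + 1] (pt σ))) 𝔉.α M 𝔉.α_pos
    (by
      intro j σ h
      have := (hsub (σ j) _ (hmem σ j)).2.2
      rw [h] at this
      refine 𝔉.ff1_pos _ this _ ?_
      rw [← h]
      exact hptD σ (j + 1))
    (by
      intro j σ h
      have := (hsub (σ j) _ (hmem σ j)).2.2
      rw [h] at this
      refine 𝔉.ff1_neg _ this _ ?_
      rw [← h]
      exact hptD σ (j + 1))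
    (fun j σ => hM _ (hptK σ (j + 1)))
    (by
      intro e he
      obtain ⟨δ, hδ, h⟩ := huc e he
      obtain ⟨k, hk⟩ := pow_unbounded_of_one_lt (𝔉.d₀ / δ) 𝔉.lam_gt_one
      refine ⟨k, fun j σ τ hst => ?_⟩
      have h1 := hdist σ τ k (j + 1) hst
      have h2 : dist (f^[j + 1] (pt σ)) (f^[j + 1] (pt τ)) < δ := by
        rw [div_lt_iff₀ hδ] at hk
        have h3 : (0 : ℝ) < 𝔉.lam ^ k := by positivity
        exact lt_of_mul_lt_mul_left (h1.trans_lt hk) h3.le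
      exact (h _ (hptK σ _) _ (hptK τ _) h2).le)
  refine ⟨f (pt σ), fun n => ?_, fun ε hε => ?_⟩
  · rw [← Function.iterate_succ_apply]; exact hptK σ (n + 1)
  · obtain ⟨N, hN⟩ := hσ ε hε
    refine ⟨N, fun n hn m => ?_⟩
    simp_rw [← Function.iterate_succ_apply]
    exact hN n hn m

lemma ff_measure {Y : Type*} [MetricSpace Y] [CompactSpace Y] [MeasurableSpace Y] [BorelSpace Y]
    (g : Y → Y) (hg : Continuous g) (ψ : Y → ℝ) (hψ : Continuous ψ) (y : Y)
    (hlim : ∀ ε : ℝ, 0 < ε → ∃ N : ℕ, ∀ n ≥ N, |∑ i ∈ Finset.range n, ψ (g^[i] y)| ≤ ε * n) :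
    ∃ μ : Measure Y, IsProbabilityMeasure μ ∧ μ.map g = μ ∧ ∫ x, ψ x ∂μ = 0 := by
  let ν : ℕ → Measure Y := fun n =>
    ((n + 1 : ℕ) : ENNReal)⁻¹ • ∑ i ∈ Finset.range (n + 1), Measure.dirac (g^[i] y)
  have hν : ∀ n, IsProbabilityMeasure (ν n) := by
    intro n
    constructor
    simp only [ν, Measure.smul_apply, Measure.finsetSum_apply, measure_univ, Finset.sum_const,
      Finset.card_range, smul_eq_mul, nsmul_eq_mul, mul_one]
    exact ENNReal.inv_mul_cancel (by simp) (by simp)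
  have hint : ∀ n (h : Y → ℝ), Continuous h → ∫ x, h x ∂(ν n)
      = ((n + 1 : ℕ) : ℝ)⁻¹ * ∑ i ∈ Finset.range (n + 1), h (g^[i] y) := by
    intro n h hh
    simp only [ν]
    rw [integral_smul_measure, integral_finsetSum_measure]
    · rw [ENNReal.toReal_inv, ENNReal.toReal_natCast]; simp
    · intro i _
      exact integrable_dirac (by simp)
  let P : ℕ → ProbabilityMeasure Y := fun n => ⟨ν n, hν n⟩
  let U : Ultrafilter ℕ := Filter.hyperfilter ℕ
  have hU : (U : Filter ℕ) ≤ atTop := by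
    rw [← Nat.cofinite_eq_atTop]; exact Filter.hyperfilter_le_cofinite
  obtain ⟨μ, -, hμ⟩ := isCompact_univ.ultrafilter_le_nhds (U.map P) (by simp)
  have hT : Tendsto P U (𝓝 μ) := hμ
  rw [ProbabilityMeasure.tendsto_iff_forall_integral_tendsto] at hT
  have hT' : ∀ h : Y → ℝ, Continuous h → Tendsto (fun n : ℕ => ((n + 1 : ℕ) : ℝ)⁻¹ *
      ∑ i ∈ Finset.range (n + 1), h (g^[i] y)) U (𝓝 (∫ x, h x ∂(μ : Measure Y))) := by
    intro h hh
    have := hT (BoundedContinuousFunction.mkOfCompact ⟨h, hh⟩)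
    refine this.congr fun n => ?_
    exact hint n h hh
  refine ⟨μ, inferInstance, ?_, ?_⟩
  · haveI : IsProbabilityMeasure ((μ : Measure Y).map g) :=
      Measure.isProbabilityMeasure_map hg.aemeasurable
    apply ext_of_forall_integral_eq_of_IsFiniteMeasure
    intro h
    rw [integral_map hg.aemeasurable h.continuous.aestronglyMeasurable]
    have t1 := hT' (fun x => h (g x)) (h.continuous.comp hg)
    have t2 := hT' h h.continuous
    have t3 := t1.sub t2
    have t4 : Tendsto (fun n : ℕ => ((n + 1 : ℕ) : ℝ)⁻¹ * (2 * ‖h‖)) U (𝓝 0) := by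
      have : Tendsto (fun n : ℕ => ((n + 1 : ℕ) : ℝ)⁻¹ * (2 * ‖h‖)) atTop (𝓝 (0 * (2 * ‖h‖))) :=
        ((tendsto_inv_atTop_zero.comp tendsto_natCast_atTop_atTop).comp
          (tendsto_add_atTop_nat 1)).mul_const _
      rw [zero_mul] at this
      exact this.mono_left hU
    have t5 := squeeze_zero_norm (f := fun n : ℕ => ((n + 1 : ℕ) : ℝ)⁻¹ *
      ∑ i ∈ Finset.range (n + 1), h (g (g^[i] y)) - ((n + 1 : ℕ) : ℝ)⁻¹ *
      ∑ i ∈ Finset.range (n + 1), h (g^[i] y)) (fun n => by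
        rw [← mul_sub, ← Finset.sum_sub_distrib]
        simp_rw [← Function.iterate_succ_apply' g]
        rw [Finset.sum_range_sub (fun i => h (g^[i] y)), norm_mul, Real.norm_of_nonneg
          (by positivity)]
        have a1 := h.norm_coe_le_norm (g^[n + 1] y)
        have a2 := h.norm_coe_le_norm (g^[0] y)
        have a3 := norm_sub_le (h (g^[n + 1] y)) (h (g^[0] y))
        gcongr
        linarith) t4
    exact sub_eq_zero.1 (tendsto_nhds_unique t3 t5)
  · refine tendsto_nhds_unique (hT' ψ hψ) ?_
    refine Tendsto.mono_left ?_ hU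
    rw [Metric.tendsto_atTop]
    intro ε hε
    obtain ⟨N, hN⟩ := hlim (ε / 2) (half_pos hε)
    refine ⟨N, fun n hn => ?_⟩
    have h1 := hN (n + 1) (by omega)
    have h2 : (0 : ℝ) < ((n + 1 : ℕ) : ℝ) := by positivity
    rw [Real.dist_eq, sub_zero, abs_mul, abs_of_pos (inv_pos.2 h2), inv_mul_lt_iff₀ h2]
    nlinarith

/-- Abstract criterion for zero averages (weak form, without entropy): a flip-flop family
yields a nonempty compact forward-invariant set `Ω ⊆ K` on which the Birkhoff averages of
`φ` converge uniformly to `0`; in particular there is an `f`-invariant Borel probability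
measure supported in `K` with `∫ φ dμ = 0`. -/
theorem flipFlop_zero_average
    {X : Type*} [MetricSpace X] [MeasurableSpace X] [BorelSpace X]
    {f : X → X} {K : Set X} {φ : X → ℝ}
    (hf : Continuous f) (hK : IsCompact K) (hφ : ContinuousOn φ K)
    (𝔉 : FlipFlopFamily f K φ) (hne : (𝔉.pos ∪ 𝔉.neg).Nonempty) :
    (∃ Ω : Set X, Ω.Nonempty ∧ IsCompact Ω ∧ Ω ⊆ K ∧ Set.MapsTo f Ω Ω ∧
      ∀ ε : ℝ, 0 < ε → ∃ N : ℕ, ∀ n ≥ N, ∀ x ∈ Ω, |birkhoff f φ n x| ≤ ε * n) ∧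
    ∃ μ : Measure X, IsProbabilityMeasure μ ∧ μ.map f = μ ∧ μ Kᶜ = 0 ∧
      ∫ x, φ x ∂μ = 0 := by
  obtain ⟨x, hxK, hx⟩ := ff_coding hf hK hφ 𝔉 hne
  set Ω : Set X := closure (Set.range fun n => f^[n] x) with hΩ
  have hΩK : Ω ⊆ K := closure_minimal (by rintro _ ⟨n, rfl⟩; exact hxK n) hK.isClosed
  have hΩc : IsCompact Ω := hK.of_isClosed_subset isClosed_closure hΩK
  have hxΩ : x ∈ Ω := subset_closure ⟨0, rfl⟩
  have hmaps : Set.MapsTo f Ω Ω := by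
    apply Set.MapsTo.closure _ hf
    rintro _ ⟨n, rfl⟩
    exact ⟨n + 1, Function.iterate_succ_apply' f n x⟩
  have hcont : ∀ n, ContinuousOn (birkhoff f φ n) Ω := by
    intro n
    unfold birkhoff
    refine continuousOn_finset_sum _ fun i _ => ?_
    exact hφ.comp (hf.iterate i).continuousOn fun y hy => hΩK (hmaps.iterate i hy)
  have hunif : ∀ ε : ℝ, 0 < ε → ∃ N : ℕ, ∀ n ≥ N, ∀ y ∈ Ω, |birkhoff f φ n y| ≤ ε * n := by
    intro ε hε
    obtain ⟨N, hN⟩ := hx ε hε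
    refine ⟨N, fun n hn y hy => ?_⟩
    refine ContinuousWithinAt.closure_le hy
      (((hcont n).abs y hy).mono subset_closure) continuousWithinAt_const ?_
    rintro _ ⟨m, rfl⟩
    unfold birkhoff
    have := hN n hn m
    simp_rw [← Function.iterate_add_apply]
    simpa only [add_comm] using this
  refine ⟨⟨Ω, ⟨x, hxΩ⟩, hΩc, hΩK, hmaps, hunif⟩, ?_⟩
  haveI : CompactSpace Ω := isCompact_iff_compactSpace.1 hΩc
  let g : Ω → Ω := hmaps.restrict f Ω Ω
  have hg : Continuous g := hf.continuousOn.mapsToRestrict hmaps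
  have hgi : ∀ (i : ℕ) (y : Ω), ((g^[i] y : Ω) : X) = f^[i] y := by
    intro i
    induction i with
    | zero => intro y; rfl
    | succ i ih => intro y; rw [Function.iterate_succ_apply, Function.iterate_succ_apply, ih]; rfl
  have hψ : Continuous fun y : Ω => φ y := (hφ.mono hΩK).restrict
  obtain ⟨μ, hμ, hinv, hzero⟩ := ff_measure g hg (fun y => φ y) hψ ⟨x, hxΩ⟩ (by
    intro ε hε
    obtain ⟨N, hN⟩ := hunif ε hε
    refine ⟨N, fun n hn => ?_⟩
    simp_rw [hgi]
    exact hN n hn x hxΩ)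
  have hΩm : MeasurableSet Ω := isClosed_closure.measurableSet
  refine ⟨μ.map Subtype.val, Measure.isProbabilityMeasure_map measurable_subtype_coe.aemeasurable,
    ?_, ?_, ?_⟩
  · rw [Measure.map_map hf.measurable measurable_subtype_coe]
    conv_rhs => rw [← hinv]
    rw [Measure.map_map measurable_subtype_coe hg.measurable]
    rfl
  · rw [Measure.map_apply measurable_subtype_coe hK.isClosed.measurableSet.compl]
    convert measure_empty (μ := μ)
    ext y
    simpa using hΩK y.2
  · rw [(MeasurableEmbedding.subtype_coe hΩm).integral_map]
    exact hzero
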